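/- arXiv:2112.05064 — 4 statements merged into one kernel-verified Lean document; each statement's English description precedes it below -/
import Mathlib

section
/- For all integers m, i, n with 0 ≤ i ≤ m and n ≥ 0, the (n+1)-Stirling number of the first kind satisfies ⟦m+n+1, i+n+1⟧_{n+1} = Σ_{j=0}^{m-i} C(i+j, i) · ⟦m+1, i+j+1⟧ · n^j, where C(a,b) is a binomial coefficient. -/
/-- The `r`-Stirling numbers of the first kind `⟦n,k⟧_r`: `⟦r,r⟧_r = 1`,
`⟦n,k⟧_r = 0` if `n < r` or `k < r`, and
`⟦n,k⟧_r = (n-1)·⟦n-1,k⟧_r + ⟦n-1,k-1⟧_r` for `n > r`. -/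
def rStirling1 (r : ℕ) : ℕ → ℕ → ℕ
  | 0, k => if r = 0 ∧ k = 0 then 1 else 0
  | (n+1), k =>
    if n + 1 < r ∨ k < r then 0
    else if n + 1 = r then (if k = r then 1 else 0)
    else if k = 0 then 0
    else n * rStirling1 r n k + rStirling1 r n (k - 1)

/-- The (unsigned) Stirling numbers of the first kind. -/
def stirling1 : ℕ → ℕ → ℕ := rStirling1 0

/-!
The `r`-Stirling numbers are the coefficients of a shifted rising factorial,
`∑ i, ⟦m + r, i + r⟧_r X ^ i = (X + r) (X + r + 1) ⋯ (X + r + m - 1)`,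
because both sides satisfy the same recurrence in `m`. Passing from `r` to `n + r` therefore
substitutes `X + n` for `X`, and the Taylor expansion of this substitution is the identity sought.
The classical numbers are the case `r = 1`: distinguishing a single element is no restriction, so
`⟦m + 1, k⟧_1 = ⟦m + 1, k⟧`.
-/

open Polynomial

section Recurrence

variable {r n k : ℕ}

lemma rStirling1_eq_zero_of_lt (h : k < r) : rStirling1 r n k = 0 := by
  cases n <;> rw [rStirling1]
  · exact if_neg (by omega)
  · exact if_pos (Or.inr h)

lemma rStirling1_self_left (r k : ℕ) : rStirling1 r r k = if k = r then 1 else 0 := by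
  cases r <;> grind [rStirling1]

lemma rStirling1_zero_succ_zero (n : ℕ) : rStirling1 0 (n + 1) 0 = 0 := by
  simp [rStirling1]

lemma rStirling1_succ_succ (h : r ≤ n) :
    rStirling1 r (n + 1) (k + 1) = n * rStirling1 r n (k + 1) + rStirling1 r n k := by
  rcases lt_or_ge (k + 1) r with hk | hk
  · simp only [rStirling1_eq_zero_of_lt hk, rStirling1_eq_zero_of_lt (k.lt_succ_self.trans hk),
      mul_zero, add_zero]
  · rw [rStirling1, if_neg (by omega), if_neg (by omega), if_neg k.succ_ne_zero,
      Nat.add_sub_cancel]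

lemma rStirling1_succ_self (h : r ≤ n) : rStirling1 r (n + 1) r = n * rStirling1 r n r := by
  cases r with
  | zero => cases n <;> simp [rStirling1_zero_succ_zero]
  | succ r => rw [rStirling1_succ_succ h, rStirling1_eq_zero_of_lt r.lt_succ_self, add_zero]

end Recurrence

lemma rStirling1_one_succ_eq_stirling1 (n k : ℕ) :
    rStirling1 1 (n + 1) k = stirling1 (n + 1) k := by
  unfold stirling1
  induction n generalizing k with
  | zero => cases k <;> simp [rStirling1]
  | succ n ih =>
    cases k with
    | zero => rw [rStirling1_zero_succ_zero, rStirling1_eq_zero_of_lt one_pos]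
    | succ k => rw [rStirling1_succ_succ n.succ_pos, ih, ih, rStirling1_succ_succ (n + 1).zero_le]

lemma taylor_ascPochhammer_succ {R : Type*} [CommSemiring R] (x : R) (m : ℕ) :
    taylor x (ascPochhammer R (m + 1)) = taylor x (ascPochhammer R m) * (X + C (m + x)) := by
  rw [ascPochhammer_succ_right, taylor_mul, map_add, taylor_X, ← C_eq_natCast, taylor_C, C_add,
    add_assoc, add_comm (C x)]

lemma coeff_taylor_ascPochhammer (R : Type*) [CommSemiring R] (r m i : ℕ) :
    (taylor (r : R) (ascPochhammer R m)).coeff i = rStirling1 r (m + r) (i + r) := by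
  induction m generalizing i with
  | zero => simp [rStirling1_self_left, coeff_one]
  | succ m ih =>
    have hr : r ≤ m + r := r.le_add_left m
    rw [taylor_ascPochhammer_succ, mul_add, coeff_add, coeff_mul_C, ih, Nat.add_right_comm m 1 r]
    cases i with
    | zero =>
      rw [zero_add, rStirling1_succ_self hr, coeff_mul_X_zero]
      push_cast
      ring
    | succ i =>
      rw [Nat.add_right_comm i 1 r, rStirling1_succ_succ hr, coeff_mul_X, ih]
      push_cast
      ring

lemma coeff_taylor_eq_sum_range {R : Type*} [Semiring R] (x : R) (f : R[X]) (i : ℕ) :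
    (taylor x f).coeff i =
      ∑ j ∈ Finset.range (f.natDegree - i + 1), (i + j).choose i * f.coeff (i + j) * x ^ j := by
  rw [taylor_coeff, eval_eq_sum_range' (Nat.lt_add_one_of_le (natDegree_hasseDeriv_le f i))]
  simp only [hasseDeriv_coeff, add_comm i]

theorem stmt0_general (r m i n : ℕ) :
    rStirling1 (n + r) (m + n + r) (i + n + r) =
      ∑ j ∈ Finset.range (m - i + 1),
        (i + j).choose i * rStirling1 r (m + r) (i + j + r) * n ^ j := by
  have coeff_eq (r m i : ℕ) :
      rStirling1 r (m + r) (i + r) = (taylor r (ascPochhammer ℕ m)).coeff i := by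
    simpa only [Nat.cast_id] using (coeff_taylor_ascPochhammer ℕ r m i).symm
  calc
    rStirling1 (n + r) (m + n + r) (i + n + r)
    _ = (taylor n (taylor r (ascPochhammer ℕ m))).coeff i := by
      rw [add_assoc m, add_assoc i, coeff_eq, taylor_taylor]
    _ = ∑ j ∈ Finset.range (m - i + 1),
          (i + j).choose i * (taylor r (ascPochhammer ℕ m)).coeff (i + j) * n ^ j := by
      simp only [coeff_taylor_eq_sum_range n, natDegree_taylor, ascPochhammer_natDegree,
        Nat.cast_id]
    _ = ∑ j ∈ Finset.range (m - i + 1),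
          (i + j).choose i * rStirling1 r (m + r) (i + j + r) * n ^ j := by
      simp only [coeff_eq]

theorem stmt0 (m i n : ℕ) (h : i ≤ m) :
    rStirling1 (n + 1) (m + n + 1) (i + n + 1) =
      ∑ j ∈ Finset.range (m - i + 1),
        (i + j).choose i * stirling1 (m + 1) (i + j + 1) * n ^ j := by
  simp only [stmt0_general, rStirling1_one_succ_eq_stirling1]
end

section
/- For all integers m, i with 0 ≤ i ≤ m and every real number x, Σ_{j=0}^{m−i} C(i+j, i) · ⟦m+1, i+j+1⟧ · x^j = Σ_{j=0}^{m−i} C(i+j, i) · ⟦m, i+j⟧ · (x+1)^j, where C(a,b) is a binomial coefficient. -/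
/-! The rising factorial `p = X (X + 1) ⋯ (X + m - 1)` has coefficients `⟦m, k⟧`. The next rising
factorial is `X · p(X + 1)`, so `p(X + 1)` has coefficients `⟦m + 1, k + 1⟧`. Differentiating `i`
times and dividing by `i!` commutes with the translation `X ↦ X + 1`; applying both operations to
`p`, in either order, and evaluating at `x` gives the two sides. -/

section

open Polynomial

theorem stirling1_eq_stirlingFirst (n k : ℕ) : stirling1 n k = Nat.stirlingFirst n k := by
  unfold stirling1
  induction n generalizing k with
  | zero => cases k <;> simp [rStirling1]
  | succ n ih => cases k <;> simp [rStirling1, Nat.stirlingFirst_succ_succ, ih]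

theorem coeff_ascPochhammer (S : Type*) [Semiring S] (n k : ℕ) :
    (ascPochhammer S n).coeff k = Nat.stirlingFirst n k := by
  induction n generalizing k with
  | zero => cases k <;> simp [coeff_one]
  | succ n ih =>
    rw [ascPochhammer_succ_right, mul_add, coeff_add, coeff_mul_natCast, ih]
    cases k with
    | zero => cases n <;> simp
    | succ k =>
      rw [coeff_mul_X, ih, Nat.stirlingFirst_succ_succ, ← Nat.cast_mul, ← Nat.cast_add]
      congr 1
      ring

theorem coeff_taylor_one_ascPochhammer (S : Type*) [Semiring S] (n k : ℕ) :
    (taylor 1 (ascPochhammer S n)).coeff k = Nat.stirlingFirst (n + 1) (k + 1) := by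
  rw [← coeff_ascPochhammer, ascPochhammer_succ_left, coeff_X_mul, taylor_apply, C_1]

theorem hasseDeriv_taylor {R : Type*} [Semiring R] (n : ℕ) (r : R) (p : R[X]) :
    hasseDeriv n (taylor r p) = taylor r (hasseDeriv n p) := by
  ext k
  rw [hasseDeriv_coeff, taylor_coeff, taylor_coeff, ← LinearMap.comp_apply, hasseDeriv_comp,
    LinearMap.smul_apply, eval_smul, nsmul_eq_mul, Nat.choose_symm_add]

section Algebra

variable {R A : Type*} [CommSemiring R] [Semiring A] [Algebra R A]

theorem aeval_taylor (r : R) (p : R[X]) (x : A) :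
    aeval x (taylor r p) = aeval (x + algebraMap R A r) p := by
  rw [taylor_apply, aeval_comp, map_add, aeval_X, aeval_C]

theorem aeval_hasseDeriv_eq_sum_range {p : R[X]} {m : ℕ} (hp : p.natDegree ≤ m) (i : ℕ) (x : A) :
    aeval x (hasseDeriv i p) =
      ∑ j ∈ Finset.range (m - i + 1), (((i + j).choose i : R) * p.coeff (i + j)) • x ^ j := by
  have hdeg : (hasseDeriv i p).natDegree < m - i + 1 :=
    Nat.lt_succ_of_le ((natDegree_hasseDeriv_le p i).trans (Nat.sub_le_sub_right hp i))
  simp only [aeval_eq_sum_range' hdeg, hasseDeriv_coeff, add_comm _ i]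

end Algebra

theorem stmt4_general {A : Type*} [Semiring A] (m i : ℕ) (x : A) :
    ∑ j ∈ Finset.range (m - i + 1),
        ((i + j).choose i : A) * stirling1 (m + 1) (i + j + 1) * x ^ j =
      ∑ j ∈ Finset.range (m - i + 1),
        ((i + j).choose i : A) * stirling1 m (i + j) * (x + 1) ^ j := by
  have hp : (ascPochhammer ℕ m).natDegree ≤ m := (ascPochhammer_natDegree ℕ m).le
  have htaylor : (taylor 1 (ascPochhammer ℕ m)).natDegree ≤ m := by rwa [natDegree_taylor]
  have key : aeval x (hasseDeriv i (taylor 1 (ascPochhammer ℕ m))) =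
      aeval (x + 1) (hasseDeriv i (ascPochhammer ℕ m)) := by
    rw [hasseDeriv_taylor, aeval_taylor, map_one]
  simpa only [aeval_hasseDeriv_eq_sum_range htaylor, aeval_hasseDeriv_eq_sum_range hp,
    coeff_taylor_one_ascPochhammer, coeff_ascPochhammer, ← stirling1_eq_stirlingFirst,
    nsmul_eq_mul, Nat.cast_mul, Nat.cast_id] using key

end

theorem stmt4 (m i : ℕ) (h : i ≤ m) (x : ℝ) :
    ∑ j ∈ Finset.range (m - i + 1),
        ((i + j).choose i : ℝ) * stirling1 (m + 1) (i + j + 1) * x ^ j =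
      ∑ j ∈ Finset.range (m - i + 1),
        ((i + j).choose i : ℝ) * stirling1 m (i + j) * (x + 1) ^ j :=
  stmt4_general m i x
end

section
/- For all integers i, j, r with 0 ≤ i ≤ j and r ≥ 0, Σ_{t=0}^{j} (1/(t! · (j+1−t))) · ⟦t+r, i+r⟧_r = ((i+1)/(j+1)!) · ⟦j+r+1, i+r+1⟧_r, as an identity of rational numbers. -/
/-
For fixed `n`, the generating function of `⟦n+r, k+r⟧_r` in `k` is the rising factorial
`(x+r)(x+r+1)⋯(x+r+n-1)`. By Pascal's rule, the derivative of the rising factorial of length `n+1`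
is the combination of the shorter ones with coefficients
`(n+1).choose t * (n-t)! = (n+1)! / (t! * (n+1-t))`. Comparing coefficients of `x ^ i` gives the
identity multiplied by `(j+1)!`, the factor `i+1` coming from the derivative.
-/

open Finset Finset.Nat Polynomial
open scoped Nat

theorem ascPochhammer_mul_X_add_natCast_add (R : Type*) [Semiring R] (t m : ℕ) :
    ascPochhammer R t * (X + ((t + m : ℕ) : R[X])) =
      ascPochhammer R (t + 1) + m • ascPochhammer R t := by
  rw [ascPochhammer_succ_right, Nat.cast_add, ← add_assoc, mul_add _ _ (m : R[X]), nsmul_eq_mul,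
    (Nat.cast_commute m _).eq]

theorem derivative_ascPochhammer_succ (R : Type*) [Semiring R] (n : ℕ) :
    derivative (ascPochhammer R (n + 1)) =
      ∑ p ∈ antidiagonal n, ((n + 1).choose p.1 * p.2 !) • ascPochhammer R p.1 := by
  induction n with
  | zero => simp
  | succ n ih =>
    have expand : ∀ p ∈ antidiagonal n,
        ((n + 1).choose p.1 * p.2 !) • ascPochhammer R p.1 * (X + ((n + 1 : ℕ) : R[X])) =
          ((n + 1).choose p.1 * p.2 !) • ascPochhammer R (p.1 + 1) +
            ((n + 1).choose p.1 * (p.2 + 1)!) • ascPochhammer R p.1 := by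
      rintro ⟨t, m⟩ hp
      obtain rfl : t + m = n := mem_antidiagonal.mp hp
      rw [smul_mul_assoc, add_assoc t m 1, ascPochhammer_mul_X_add_natCast_add, smul_add, smul_smul,
        mul_assoc, Nat.factorial_succ, mul_comm m !]
    calc derivative (ascPochhammer R (n + 2))
        = derivative (ascPochhammer R (n + 1)) * (X + ((n + 1 : ℕ) : R[X])) +
            ascPochhammer R (n + 1) := by
          rw [ascPochhammer_succ_right, derivative_mul, derivative_add, derivative_X,
            derivative_natCast, add_zero, mul_one]
      _ = ∑ p ∈ antidiagonal n, ((n + 1).choose p.1 * p.2 !) • ascPochhammer R (p.1 + 1) +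
            ∑ p ∈ antidiagonal (n + 1), ((n + 1).choose p.1 * p.2 !) • ascPochhammer R p.1 := by
          rw [ih, sum_mul, sum_congr rfl expand, sum_add_distrib,
            sum_antidiagonal_succ' (n := n), Nat.choose_self, Nat.factorial_zero, mul_one,
            one_smul, add_assoc, add_comm (ascPochhammer R (n + 1))]
      _ = ∑ p ∈ antidiagonal (n + 1), ((n + 2).choose p.1 * p.2 !) • ascPochhammer R p.1 := by
          simp only [sum_antidiagonal_succ, Nat.choose_zero_right, Nat.choose_succ_succ' (n + 1),
            add_mul, add_smul, sum_add_distrib]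
          exact add_left_comm _ _ _

theorem rStirling1_of_lt {r k : ℕ} (n : ℕ) (h : k < r) : rStirling1 r n k = 0 := by
  cases n with
  | zero => rw [rStirling1, if_neg (by lia)]
  | succ n => rw [rStirling1, if_pos (.inr h)]

theorem rStirling1_self_add (r k : ℕ) : rStirling1 r r (k + r) = if k = 0 then 1 else 0 := by
  cases r with
  | zero => simp [rStirling1]
  | succ r =>
    rw [rStirling1, if_neg (by lia), if_pos rfl]
    exact if_congr Nat.add_eq_right rfl rfl

theorem rStirling1_succ_add_succ_add (r n k : ℕ) :
    rStirling1 r (n + 1 + r) (k + 1 + r) =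
      (n + r) * rStirling1 r (n + r) (k + 1 + r) + rStirling1 r (n + r) (k + r) := by
  rw [Nat.add_right_comm n, rStirling1, if_neg (by lia), if_neg (by lia), if_neg (by lia),
    Nat.add_right_comm k, Nat.add_sub_cancel]

theorem rStirling1_succ_add_self (r n : ℕ) :
    rStirling1 r (n + 1 + r) r = (n + r) * rStirling1 r (n + r) r := by
  rw [Nat.add_right_comm, rStirling1, if_neg (by lia), if_neg (by lia)]
  split_ifs with hr
  · subst hr
    cases n <;> simp [rStirling1]
  · rw [rStirling1_of_lt _ (by lia : r - 1 < r), add_zero]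

theorem coeff_ascPochhammer_comp_X_add_natCast (r n k : ℕ) :
    ((ascPochhammer ℕ n).comp (X + (r : ℕ[X]))).coeff k = rStirling1 r (n + r) (k + r) := by
  induction n generalizing k with
  | zero => rw [ascPochhammer_zero, one_comp, coeff_one, zero_add, rStirling1_self_add]
  | succ n ih =>
    rw [ascPochhammer_succ_right, mul_X_add_natCast_comp, add_assoc, ← Nat.cast_add, mul_add,
      coeff_add, coeff_mul_natCast, ih, Nat.cast_id, add_comm r n]
    cases k with
    | zero => rw [coeff_mul_X_zero, zero_add, zero_add, rStirling1_succ_add_self, mul_comm]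
    | succ k => rw [coeff_mul_X, ih, rStirling1_succ_add_succ_add, mul_comm, add_comm]

theorem sum_antidiagonal_choose_mul_factorial_mul_rStirling1 (r n k : ℕ) :
    ∑ p ∈ antidiagonal n, (n + 1).choose p.1 * p.2 ! * rStirling1 r (p.1 + r) (k + r) =
      (k + 1) * rStirling1 r (n + 1 + r) (k + 1 + r) := by
  have deriv_comp : derivative ((ascPochhammer ℕ (n + 1)).comp (X + (r : ℕ[X]))) =
      ∑ p ∈ antidiagonal n,
        ((n + 1).choose p.1 * p.2 !) • (ascPochhammer ℕ p.1).comp (X + (r : ℕ[X])) := by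
    rw [derivative_comp, derivative_add, derivative_X, derivative_natCast, add_zero, one_mul,
      derivative_ascPochhammer_succ, Polynomial.sum_comp]
    simp only [smul_comp]
  have coeff_deriv := congr_arg (coeff · k) deriv_comp
  simp only [coeff_derivative, finsetSum_coeff, coeff_smul, smul_eq_mul, Nat.cast_id,
    coeff_ascPochhammer_comp_X_add_natCast] at coeff_deriv
  rw [← coeff_deriv, mul_comm]

theorem succ_choose_mul_factorial_div_succ_factorial (K : Type*) [Field K] [CharZero K]
    {n t : ℕ} (h : t ≤ n) :
    ((n + 1).choose t * (n - t)! / (n + 1)! : K) = 1 / (t ! * (n + 1 - t)) := by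
  have cast_sub_add_one : (n + 1 - t : K) = ((n - t + 1 : ℕ) : K) := by push_cast [h]; ring
  rw [Nat.cast_choose K (h.trans n.le_succ), cast_sub_add_one, Nat.succ_sub h,
    Nat.factorial_succ (n - t)]
  have h_succ_fact := Nat.cast_ne_zero (R := K).mpr (n + 1).factorial_ne_zero
  have h_sub_fact := Nat.cast_ne_zero (R := K).mpr (n - t).factorial_ne_zero
  push_cast
  field_simp

theorem stmt7 (i j r : ℕ) (h : i ≤ j) :
    ∑ t ∈ Finset.range (j + 1),
        (1 / (t.factorial * (j + 1 - t)) : ℚ) * rStirling1 r (t + r) (i + r) =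
      ((i + 1) / (j + 1).factorial) * rStirling1 r (j + r + 1) (i + r + 1) := by
  have key : (∑ t ∈ range (j + 1),
      (j + 1).choose t * (j - t)! * rStirling1 r (t + r) (i + r) : ℚ) =
        (i + 1) * rStirling1 r (j + r + 1) (i + r + 1) := by
    rw [Nat.add_right_comm j, Nat.add_right_comm i]
    exact_mod_cast (sum_antidiagonal_eq_sum_range_succ_mk _ j).symm.trans
      (sum_antidiagonal_choose_mul_factorial_mul_rStirling1 r j i)
  rw [div_mul_eq_mul_div, ← key, sum_div]
  refine sum_congr rfl fun t ht => ?_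
  rw [← succ_choose_mul_factorial_div_succ_factorial ℚ (mem_range_succ_iff.mp ht),
    div_mul_eq_mul_div]
end

section
/- For every integer m ≥ 1, Σ_{k=0}^{m} (−1)^{m−k} · (k+1)! · {m, k} · H_{k+1} = (m+2) · 2^{m−1}, where {n,k} denotes the Stirling number of the second kind and H_n is the n-th harmonic number. -/
/-- The Stirling numbers of the second kind. -/
def stirling2 : ℕ → ℕ → ℕ
  | 0, k => if k = 0 then 1 else 0
  | (_+1), 0 => 0
  | (n+1), (k+1) => (k+1) * stirling2 n (k+1) + stirling2 n k

/-!
Write `x^(k)` for the rising factorial `x (x + 1) ⋯ (x + k - 1)`. Expanding powers in rising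
factorials gives the polynomial identity `x^m = ∑ k, (-1)^(m-k) {m,k} x^(k)`. At `x = n + 1` the
value of `n! x^(k)` is `(n+k)!`, and its logarithmic derivative is
`1/(n+1) + ⋯ + 1/(n+k) = H_{n+k} - H_n`. Hence differentiating the identity at `n + 1` produces the
sum weighted by `H_{n+k} - H_n`, and adding `H_n` times the undifferentiated identity leaves the
weight `H_{n+k}`. The theorem is the case `n = 1`.
-/

open Finset Polynomial

theorem stirling2_eq_stirlingSecond (n k : ℕ) : stirling2 n k = n.stirlingSecond k := by
  induction n generalizing k with
  | zero => cases k <;> simp [stirling2]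
  | succ n ih =>
    cases k with
    | zero => simp [stirling2]
    | succ k => rw [stirling2, ih, ih, Nat.stirlingSecond_succ_succ]

theorem sum_stirlingSecond_succ_mul {R : Type*} [CommSemiring R] (m : ℕ) (f : ℕ → R) :
    ∑ k ∈ range (m + 2), ((m + 1).stirlingSecond k : R) * f k =
      ∑ k ∈ range (m + 1), (m.stirlingSecond k : R) * (f (k + 1) + k * f k) := by
  have shift : ∑ k ∈ range (m + 1), (m.stirlingSecond (k + 1) : R) * ((k + 1 : ℕ) * f (k + 1)) =
      ∑ k ∈ range (m + 1), (m.stirlingSecond k : R) * (k * f k) := by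
    have h := sum_range_succ' (fun k ↦ (m.stirlingSecond k : R) * (k * f k)) (m + 1)
    rw [sum_range_succ, Nat.stirlingSecond_eq_zero_of_lt m.lt_succ_self] at h
    simpa using h.symm
  calc
    _ = ∑ k ∈ range (m + 1), ((m + 1).stirlingSecond (k + 1) : R) * f (k + 1) := by
      simp [sum_range_succ' _ (m + 1)]
    _ = ∑ k ∈ range (m + 1), ((m.stirlingSecond k : R) * f (k + 1) +
          m.stirlingSecond (k + 1) * ((k + 1 : ℕ) * f (k + 1))) := by
      refine sum_congr rfl fun k _ ↦ ?_
      rw [Nat.stirlingSecond_succ_succ]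
      push_cast
      ring
    _ = _ := by simp only [sum_add_distrib, shift, mul_add]

theorem pow_mul_eq_sum_stirlingSecond_mul {R : Type*} [CommSemiring R] {x : R} {f : ℕ → R}
    (hf : ∀ k, x * f k = f (k + 1) + k * f k) (m : ℕ) :
    x ^ m * f 0 = ∑ k ∈ range (m + 1), (m.stirlingSecond k : R) * f k := by
  induction m with
  | zero => simp
  | succ m ih =>
    rw [sum_stirlingSecond_succ_mul, pow_succ', mul_assoc, ih, mul_sum]
    refine sum_congr rfl fun k _ ↦ ?_
    rw [← hf, mul_left_comm]

theorem X_pow_eq_sum_stirlingSecond_mul_ascPochhammer (R : Type*) [CommRing R] (m : ℕ) :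
    (X : R[X]) ^ m =
      ∑ k ∈ range (m + 1), C ((-1) ^ (m - k) * (m.stirlingSecond k : R)) * ascPochhammer R k := by
  have neg_X_pow : (-X : R[X]) ^ m = ∑ k ∈ range (m + 1),
      (m.stirlingSecond k : R[X]) * ((-1) ^ k * ascPochhammer R k) := by
    simpa using pow_mul_eq_sum_stirlingSecond_mul (x := (-X : R[X]))
      (f := fun k ↦ (-1) ^ k * ascPochhammer R k)
      (fun k ↦ by rw [ascPochhammer_succ_right]; ring) m
  calc
    (X : R[X]) ^ m = (-1) ^ m * (-X) ^ m := by rw [← mul_pow, neg_one_mul, neg_neg]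
    _ = _ := by
      rw [neg_X_pow, mul_sum]
      refine sum_congr rfl fun k hk ↦ ?_
      have sign : (-1 : R[X]) ^ m * (-1) ^ k = (-1) ^ (m - k) := by
        nth_rw 1 [← Nat.sub_add_cancel (mem_range_succ_iff.mp hk)]
        rw [pow_add, mul_assoc, ← mul_pow, neg_one_mul, neg_neg, one_pow, mul_one]
      simp only [C_mul, C_pow, C_neg, C_1, map_natCast, ← sign]
      ring

theorem eval_derivative_ascPochhammer_eq_mul_harmonic_sub (n k : ℕ) :
    (derivative (ascPochhammer ℚ k)).eval (n + 1 : ℚ) =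
      (ascPochhammer ℚ k).eval (n + 1 : ℚ) * (harmonic (k + n) - harmonic n) := by
  induction k with
  | zero => simp
  | succ k ih =>
    have hne : (n : ℚ) + 1 + k ≠ 0 := by positivity
    have harmonic_step : harmonic (k + 1 + n) = harmonic (k + n) + (n + 1 + k : ℚ)⁻¹ := by
      rw [add_right_comm, harmonic_succ]
      push_cast
      ring
    rw [ascPochhammer_succ_eval, ascPochhammer_succ_right, harmonic_step]
    simp only [derivative_mul, derivative_add, derivative_X, derivative_natCast, eval_add,
      eval_mul, eval_X, eval_natCast, add_zero, eval_one, ih]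
    field_simp
    ring

theorem stmt17_general (m n : ℕ) :
    ∑ k ∈ range (m + 1),
        (-1 : ℚ) ^ (m - k) * (k + n).factorial * stirling2 m k * harmonic (k + n) =
      n.factorial * (m * (n + 1) ^ (m - 1) + (n + 1) ^ m * harmonic n) := by
  have expansion := X_pow_eq_sum_stirlingSecond_mul_ascPochhammer ℚ m
  have value : (n + 1 : ℚ) ^ m = ∑ k ∈ range (m + 1),
      (-1) ^ (m - k) * m.stirlingSecond k * (ascPochhammer ℚ k).eval (n + 1 : ℚ) := by
    simpa only [eval_pow, eval_X, eval_finsetSum, eval_C_mul]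
      using congrArg (eval (n + 1 : ℚ)) expansion
  have slope : m * (n + 1 : ℚ) ^ (m - 1) = ∑ k ∈ range (m + 1),
      (-1) ^ (m - k) * m.stirlingSecond k *
        ((ascPochhammer ℚ k).eval (n + 1 : ℚ) * (harmonic (k + n) - harmonic n)) := by
    simpa only [derivative_X_pow, derivative_sum, derivative_C_mul, eval_C_mul, eval_pow, eval_X,
      eval_finsetSum, eval_derivative_ascPochhammer_eq_mul_harmonic_sub]
      using congrArg (fun p ↦ (derivative p).eval (n + 1 : ℚ)) expansion
  rw [value, slope, sum_mul, ← sum_add_distrib, mul_sum]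
  refine sum_congr rfl fun k _ ↦ ?_
  rw [stirling2_eq_stirlingSecond, add_comm k n, ← factorial_mul_ascPochhammer]
  ring

theorem stmt17 (m : ℕ) (hm : 1 ≤ m) :
    ∑ k ∈ Finset.range (m + 1),
        (-1 : ℚ) ^ (m - k) * (k + 1).factorial * stirling2 m k * harmonic (k + 1) =
      (m + 2) * 2 ^ (m - 1) := by
  have harmonic_one : harmonic 1 = 1 := by norm_num [harmonic_succ]
  rw [stmt17_general, harmonic_one, ← pow_sub_one_mul (Nat.one_le_iff_ne_zero.mp hm),
    Nat.factorial_one, Nat.cast_one, one_add_one_eq_two]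
  ring
end
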